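/- Let n = 3 and l_1, l_2, l_3 > 0. If (β_2, β_3) is a critical point of A(β_2, β_3) = l_1 l_2 sin β_2 + l_1 l_3 sin β_3 + l_2 l_3 sin(β_3 − β_2) and d = |r_3| > 0, then there exists σ ∈ {+1, −1} such that cos β_2 = σ l_3 / d, cos(β_3 − β_2) = σ l_1 / d, and cos β_3 = −σ l_2 / d. -/

import Mathlib

/- Planar 3-arm with edge lengths `l₁, l₂, l₃ > 0`, angle coordinates `β₂, β₃`
(and `β₁ = 0`).  Vertices: `r₀ = (0,0)`, `r₁ = (l₁, 0)`,
`r₂ = r₁ + l₂ (cos β₂, sin β₂)`, `r₃ = r₂ + l₃ (cos β₃, sin β₃)`.  The doubled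
oriented area is `A(β₂,β₃) = l₁l₂ sin β₂ + l₁l₃ sin β₃ + l₂l₃ sin (β₃ − β₂)`. -/

noncomputable section

/-- the doubled oriented area of the 3-arm. -/
def area3 (l₁ l₂ l₃ : ℝ) (b₂ b₃ : ℝ) : ℝ :=
  l₁ * l₂ * Real.sin b₂ + l₁ * l₃ * Real.sin b₃ + l₂ * l₃ * Real.sin (b₃ - b₂)

/-!
Write `p` for the inner product `e₁ ⬝ e₂` of edge vectors. The critical equations say
`e₁ ⬝ e₂ = e₂ ⬝ e₃ = -(e₁ ⬝ e₃) = p`, so in terms of `k = p / (l₁ l₂ l₃)` the three cosines are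
`k l₃`, `k l₁` and `-k l₂`. Three vectors of the plane have vanishing Gram determinant, and here
this reads `p² |e₁ + e₂ + e₃|² = l₁² l₂² l₃²`. Hence `(k d)² = 1`, and `k d` is the required sign.
-/

section

open Real

theorem hasDerivAt_area3_left (l₁ l₂ l₃ b₂ b₃ : ℝ) :
    HasDerivAt (fun t => area3 l₁ l₂ l₃ t b₃)
      (l₂ * (l₁ * cos b₂ - l₃ * cos (b₃ - b₂))) b₂ := by
  have h₁₂ := (hasDerivAt_sin b₂).const_mul (l₁ * l₂)
  have h₂₃ := ((hasDerivAt_id' b₂).const_sub b₃).sin.const_mul (l₂ * l₃)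
  exact ((h₁₂.add_const (l₁ * l₃ * sin b₃)).add h₂₃).congr_deriv (by ring)

theorem hasDerivAt_area3_right (l₁ l₂ l₃ b₂ b₃ : ℝ) :
    HasDerivAt (fun t => area3 l₁ l₂ l₃ b₂ t)
      (l₃ * (l₁ * cos b₃ + l₂ * cos (b₃ - b₂))) b₃ := by
  have h₁₃ := (hasDerivAt_sin b₃).const_mul (l₁ * l₃)
  have h₂₃ := ((hasDerivAt_id' b₃).sub_const b₂).sin.const_mul (l₂ * l₃)
  exact ((h₁₃.const_add (l₁ * l₂ * sin b₂)).add h₂₃).congr_deriv (by ring)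

theorem exists_cos_eq_mul_of_deriv_area3_eq_zero {l₁ l₂ l₃ b₂ b₃ : ℝ}
    (h₁ : l₁ ≠ 0) (h₂ : l₂ ≠ 0) (h₃ : l₃ ≠ 0)
    (hcrit₂ : deriv (fun t => area3 l₁ l₂ l₃ t b₃) b₂ = 0)
    (hcrit₃ : deriv (fun t => area3 l₁ l₂ l₃ b₂ t) b₃ = 0) :
    ∃ k : ℝ, cos b₂ = k * l₃ ∧ cos (b₃ - b₂) = k * l₁ ∧ cos b₃ = -(k * l₂) := by
  rw [(hasDerivAt_area3_left l₁ l₂ l₃ b₂ b₃).deriv] at hcrit₂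
  rw [(hasDerivAt_area3_right l₁ l₂ l₃ b₂ b₃).deriv] at hcrit₃
  have hbalance₂ : l₁ * cos b₂ - l₃ * cos (b₃ - b₂) = 0 :=
    (mul_eq_zero.mp hcrit₂).resolve_left h₂
  have hbalance₃ : l₁ * cos b₃ + l₂ * cos (b₃ - b₂) = 0 :=
    (mul_eq_zero.mp hcrit₃).resolve_left h₃
  refine ⟨cos (b₃ - b₂) / l₁, ?_, (div_mul_cancel₀ _ h₁).symm, ?_⟩
  · field_simp
    linear_combination hbalance₂
  · field_simp
    linear_combination hbalance₃

theorem sq_sum_mul_cos_add_sq_sum_mul_sin {ι : Type*} (s : Finset ι) (l β : ι → ℝ) :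
    (∑ i ∈ s, l i * cos (β i)) ^ 2 + (∑ i ∈ s, l i * sin (β i)) ^ 2
      = ∑ i ∈ s, ∑ j ∈ s, l i * l j * cos (β i - β j) := by
  simp only [sq, Finset.sum_mul_sum, ← Finset.sum_add_distrib]
  refine Finset.sum_congr rfl fun i _ => Finset.sum_congr rfl fun j _ => ?_
  rw [cos_sub]
  ring

theorem arm3_endpoint_dist_sq (l₁ l₂ l₃ b₂ b₃ : ℝ) :
    (l₁ + l₂ * cos b₂ + l₃ * cos b₃) ^ 2 + (l₂ * sin b₂ + l₃ * sin b₃) ^ 2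
      = l₁ ^ 2 + l₂ ^ 2 + l₃ ^ 2
        + 2 * (l₁ * l₂ * cos b₂ + l₁ * l₃ * cos b₃ + l₂ * l₃ * cos (b₃ - b₂)) := by
  have hcos : cos (b₂ - b₃) = cos (b₃ - b₂) := by rw [← cos_neg, neg_sub]
  let l := ![l₁, l₂, l₃]
  let β := ![0, b₂, b₃]
  calc
    _ = (∑ i, l i * cos (β i)) ^ 2 + (∑ i, l i * sin (β i)) ^ 2 := by
      simp [l, β, Fin.sum_univ_three]
    _ = ∑ i, ∑ j, l i * l j * cos (β i - β j) := sq_sum_mul_cos_add_sq_sum_mul_sin _ l β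
    _ = _ := by
      simp only [l, β, Fin.sum_univ_three, Matrix.cons_val, sub_self, sub_zero, zero_sub, cos_zero,
        cos_neg, hcos]
      ring

/-- The Gram determinant of the unit vectors at angles `0`, `x` and `y` vanishes. -/
theorem cos_sq_add_cos_sq_add_cos_sub_sq (x y : ℝ) :
    cos x ^ 2 + cos y ^ 2 + cos (y - x) ^ 2 = 1 + 2 * cos x * cos y * cos (y - x) := by
  rw [cos_sub]
  linear_combination sin x ^ 2 * sin_sq_add_cos_sq y
    + (1 - cos y ^ 2) * sin_sq_add_cos_sq x

theorem sq_mul_arm3_endpoint_dist_sq_eq_one {l₁ l₂ l₃ b₂ b₃ k : ℝ}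
    (hcos₂ : cos b₂ = k * l₃) (hcos₂₃ : cos (b₃ - b₂) = k * l₁) (hcos₃ : cos b₃ = -(k * l₂)) :
    k ^ 2 * ((l₁ + l₂ * cos b₂ + l₃ * cos b₃) ^ 2 + (l₂ * sin b₂ + l₃ * sin b₃) ^ 2) = 1 := by
  have hgram := cos_sq_add_cos_sq_add_cos_sub_sq b₂ b₃
  rw [arm3_endpoint_dist_sq]
  rw [hcos₂, hcos₂₃, hcos₃] at hgram ⊢
  linear_combination hgram

end

/-- At a critical point of `A` with `d = |r₃| > 0` there is a sign
`σ ∈ {+1, −1}` with `cos β₂ = σ l₃ / d`, `cos (β₃ − β₂) = σ l₁ / d` and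
`cos β₃ = − σ l₂ / d`. -/
theorem critical_cosines (l₁ l₂ l₃ : ℝ) (h₁ : 0 < l₁) (h₂ : 0 < l₂) (h₃ : 0 < l₃)
    (b₂ b₃ : ℝ)
    (hcrit₂ : deriv (fun t => area3 l₁ l₂ l₃ t b₃) b₂ = 0)
    (hcrit₃ : deriv (fun t => area3 l₁ l₂ l₃ b₂ t) b₃ = 0)
    (d : ℝ)
    (hd : d = Real.sqrt ((l₁ + l₂ * Real.cos b₂ + l₃ * Real.cos b₃) ^ 2
        + (l₂ * Real.sin b₂ + l₃ * Real.sin b₃) ^ 2))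
    (hdpos : 0 < d) :
    ∃ σ : ℝ, (σ = 1 ∨ σ = -1) ∧
      Real.cos b₂ = σ * l₃ / d ∧
      Real.cos (b₃ - b₂) = σ * l₁ / d ∧
      Real.cos b₃ = -(σ * l₂) / d := by
  obtain ⟨k, hcos₂, hcos₂₃, hcos₃⟩ :=
    exists_cos_eq_mul_of_deriv_area3_eq_zero h₁.ne' h₂.ne' h₃.ne' hcrit₂ hcrit₃
  have hsign : (k * d) ^ 2 = 1 := by
    rw [mul_pow, hd, Real.sq_sqrt (by positivity)]
    exact sq_mul_arm3_endpoint_dist_sq_eq_one hcos₂ hcos₂₃ hcos₃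
  refine ⟨k * d, sq_eq_one_iff.mp hsign, ?_, ?_, ?_⟩
  · rw [hcos₂]
    field_simp
  · rw [hcos₂₃]
    field_simp
  · rw [hcos₃]
    field_simp

end
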